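/- arXiv:2110.14798 — 6 statements merged into one kernel-verified Lean document; each statement's English description precedes it below -/
import Mathlib

section
/- Consider a finite-horizon MDP, feature maps φ_h : S × A → ℝ^d for h ∈ {1,…,H}, an optimal policy π* with π*_h(s) ∈ argmax_a Q*_h(s,a), a policy π, functions Q̄_h : S × A → ℝ for h ∈ {1,…,H} with V̄_h(s) := max_{a∈A} Q̄_h(s,a) and V̄_{H+1} ≡ 0, symmetric positive definite matrices Λ_h ∈ ℝ^{d×d}, a scalar β ≥ 0, and constants C_h ≥ 0. Assume: (a) π is greedy with respect to Q̄: π_h(s) ∈ argmax_{a∈A} Q̄_h(s,a) for all s, h; (b) global optimism: V̄_1(s) ≥ V*_1(s) for all s; (c) almost local optimism: Q̄_h(s,a) + C_h β ‖φ_h(s,a)‖_{Λ_h^{-1}} ≥ Q*_h(s,a) for all h ∈ {2,…,H}, s ∈ S, a ∈ A; (d) for all h ∈ {1,…,H} and all s ∈ S, V̄_h(s) − V^π_h(s) ≤ 2β ‖φ_h(s, π_h(s))‖_{Λ_h^{-1}} + Σ_{s'∈S} p_h(s'|s, π_h(s)) (V̄_{h+1}(s') − V^π_{h+1}(s')). Then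 for every h ∈ {1,…,H} and every s ∈ S: Δ_h(s, π_h(s)) ≤ 2 E_π[ Σ_{i=h}^{H} β ‖φ_i(s_i, a_i)‖_{Λ_i^{-1}} | s_h = s ] + 1{h > 1} · C_h β ‖φ_h(s, π*_h(s))‖_{Λ_h^{-1}}. -/
/-!
STATEMENT 1: gap bound for an optimistic greedy algorithm (combined lemma for
ELEANOR / LSVI-UCB): under greediness, global optimism, almost local optimism
and the confidence-set property, for every stage `h ∈ [1,H]` and state `s`,
`Δ_h(s, π_h(s)) ≤ 2 E_π[Σ_{i=h}^H β‖φ_i(s_i,a_i)‖_{Λ_i⁻¹} | s_h = s]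
  + 1{h>1} C_h β ‖φ_h(s, π*_h(s))‖_{Λ_h⁻¹}`.
-/

open Finset Matrix

variable {S A : Type*}

section MDP
variable [Fintype S] [Fintype A] [Nonempty A]

/-- Optimal value function by backward induction (fuel `H + 1 - h`). -/
noncomputable def VstarAux (r : ℕ → S → A → ℝ) (p : ℕ → S → A → S → ℝ) :
    ℕ → ℕ → S → ℝ
  | 0, _, _ => 0
  | t + 1, h, s =>
      Finset.univ.sup' Finset.univ_nonempty fun a : A =>
        r h s a + ∑ s' : S, p h s a s' * VstarAux r p t (h + 1) s'

noncomputable def Vstar (H : ℕ) (r : ℕ → S → A → ℝ) (p : ℕ → S → A → S → ℝ)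
    (h : ℕ) (s : S) : ℝ :=
  VstarAux r p (H + 1 - h) h s

noncomputable def Qstar (H : ℕ) (r : ℕ → S → A → ℝ) (p : ℕ → S → A → S → ℝ)
    (h : ℕ) (s : S) (a : A) : ℝ :=
  r h s a + ∑ s' : S, p h s a s' * Vstar H r p (h + 1) s'

/-- Suboptimality gap `Δ_h(s,a) = V*_h(s) − Q*_h(s,a)`. -/
noncomputable def gap (H : ℕ) (r : ℕ → S → A → ℝ) (p : ℕ → S → A → S → ℝ)
    (h : ℕ) (s : S) (a : A) : ℝ :=
  Vstar H r p h s - Qstar H r p h s a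

/-- Value function of a deterministic policy (fuel `H + 1 - h`). -/
noncomputable def VpiAux (r : ℕ → S → A → ℝ) (p : ℕ → S → A → S → ℝ)
    (π : ℕ → S → A) : ℕ → ℕ → S → ℝ
  | 0, _, _ => 0
  | t + 1, h, s =>
      r h s (π h s) + ∑ s' : S, p h s (π h s) s' * VpiAux r p π t (h + 1) s'

noncomputable def Vpi (H : ℕ) (r : ℕ → S → A → ℝ) (p : ℕ → S → A → S → ℝ)
    (π : ℕ → S → A) (h : ℕ) (s : S) : ℝ :=
  VpiAux r p π (H + 1 - h) h s

/-- `cumulAux p π g t h s = E_π[ Σ_{i=h}^{h+t-1} g_i(s_i) | s_h = s ]`. -/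
noncomputable def cumulAux (p : ℕ → S → A → S → ℝ) (π : ℕ → S → A)
    (g : ℕ → S → ℝ) : ℕ → ℕ → S → ℝ
  | 0, _, _ => 0
  | t + 1, h, s =>
      g h s + ∑ s' : S, p h s (π h s) s' * cumulAux p π g t (h + 1) s'

/-- `cumul H p π g h s = E_π[ Σ_{i=h}^H g_i(s_i) | s_h = s ]`. -/
noncomputable def cumul (H : ℕ) (p : ℕ → S → A → S → ℝ) (π : ℕ → S → A)
    (g : ℕ → S → ℝ) (h : ℕ) (s : S) : ℝ :=
  cumulAux p π g (H + 1 - h) h s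

end MDP

/-- The weighted norm `‖x‖_M = √(xᵀ M x)`. -/
noncomputable def matNorm {d : ℕ} (M : Matrix (Fin d) (Fin d) ℝ) (x : Fin d → ℝ) : ℝ :=
  Real.sqrt (x ⬝ᵥ M.mulVec x)

/-
Since `V^π_h(s) ≤ Q*_h(s, π_h(s))`, the gap is at most `V*_h(s) - V^π_h(s)`, and optimism bounds
this by `V̄_h(s) - V^π_h(s)` plus the slack in local optimism at stage `h` alone. Both inequalities
that propagate through the stages, `V^π ≤ V*` and `V̄ - V^π ≤ E_π[Σ bonuses]`, are instances of one
comparison principle: a subsolution of a Bellman recursion with nonnegative weights lies below a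
supersolution.
-/

theorem le_of_backward_subsolution_of_supersolution {R : Type*} [Semiring R] [PartialOrder R]
    [IsOrderedRing R] [Fintype S] {m H : ℕ} {q : ℕ → S → S → R} {g u v : ℕ → S → R}
    (hq : ∀ h s s', 0 ≤ q h s s')
    (hu : ∀ h, m ≤ h → h ≤ H → ∀ s, u h s ≤ g h s + ∑ s', q h s s' * u (h + 1) s')
    (hv : ∀ h, m ≤ h → h ≤ H → ∀ s, g h s + ∑ s', q h s s' * v (h + 1) s' ≤ v h s)
    (hend : ∀ s, u (H + 1) s ≤ v (H + 1) s) (hm : m ≤ H + 1) (s : S) : u m s ≤ v m s := by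
  refine Nat.decreasingInduction' (P := fun h => ∀ s, u h s ≤ v h s)
    (fun h hlt hmh ih s => ?_) hm hend s
  have hH : h ≤ H := Nat.le_of_lt_succ hlt
  calc u h s ≤ g h s + ∑ s', q h s s' * u (h + 1) s' := hu h hmh hH s
    _ ≤ g h s + ∑ s', q h s s' * v (h + 1) s' := by
      gcongr with s'
      · exact hq h s s'
      · exact ih s'
    _ ≤ v h s := hv h hmh hH s

section BellmanEquations
variable [Fintype S] {H h : ℕ} {r : ℕ → S → A → ℝ} {p : ℕ → S → A → S → ℝ}
  {π : ℕ → S → A} {g : ℕ → S → ℝ}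

theorem Vpi_horizon_succ (s : S) : Vpi H r p π (H + 1) s = 0 := by
  simp only [Vpi, Nat.sub_self, VpiAux]

theorem Vpi_eq_add_sum (hH : h ≤ H) (s : S) :
    Vpi H r p π h s = r h s (π h s) + ∑ s', p h s (π h s) s' * Vpi H r p π (h + 1) s' := by
  simp only [Vpi, Nat.sub_add_comm hH, Nat.add_sub_add_right, VpiAux]

theorem cumul_horizon_succ (s : S) : cumul H p π g (H + 1) s = 0 := by
  simp only [cumul, Nat.sub_self, cumulAux]

theorem cumul_eq_add_sum (hH : h ≤ H) (s : S) :
    cumul H p π g h s = g h s + ∑ s', p h s (π h s) s' * cumul H p π g (h + 1) s' := by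
  simp only [cumul, Nat.sub_add_comm hH, Nat.add_sub_add_right, cumulAux]

theorem cumulAux_const_mul (c : ℝ) (t h : ℕ) (s : S) :
    cumulAux p π (fun i s' => c * g i s') t h s = c * cumulAux p π g t h s := by
  induction t generalizing h s with
  | zero => simp only [cumulAux, mul_zero]
  | succ t ih => simp only [cumulAux, ih, mul_add, Finset.mul_sum, mul_left_comm]

theorem cumul_const_mul (c : ℝ) (h : ℕ) (s : S) :
    cumul H p π (fun i s' => c * g i s') h s = c * cumul H p π g h s :=
  cumulAux_const_mul c _ h s

theorem le_cumul_of_le_add_sum {f : ℕ → S → ℝ} (hp : ∀ h s a s', 0 ≤ p h s a s')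
    (hf : ∀ k, h ≤ k → k ≤ H → ∀ s, f k s ≤ g k s + ∑ s', p k s (π k s) s' * f (k + 1) s')
    (hend : ∀ s, f (H + 1) s ≤ 0) (hH : h ≤ H + 1) (s : S) : f h s ≤ cumul H p π g h s :=
  le_of_backward_subsolution_of_supersolution
    (q := fun k x => p k x (π k x)) (fun k x => hp k x (π k x)) hf
    (fun _ _ hk x => (cumul_eq_add_sum hk x).ge)
    (fun x => (hend x).trans_eq (cumul_horizon_succ x).symm) hH s

variable [Fintype A] [Nonempty A]

theorem Vstar_horizon_succ (s : S) : Vstar H r p (H + 1) s = 0 := by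
  simp only [Vstar, Nat.sub_self, VstarAux]

theorem Vstar_eq_sup'_Qstar (hH : h ≤ H) (s : S) :
    Vstar H r p h s = Finset.univ.sup' Finset.univ_nonempty fun a => Qstar H r p h s a := by
  simp only [Qstar, Vstar, Nat.sub_add_comm hH, Nat.add_sub_add_right, VstarAux]

theorem Qstar_le_Vstar (hH : h ≤ H) (s : S) (a : A) : Qstar H r p h s a ≤ Vstar H r p h s := by
  rw [Vstar_eq_sup'_Qstar hH]
  exact Finset.le_sup' (Qstar H r p h s) (Finset.mem_univ a)

end BellmanEquations

section GapBound
variable [Fintype S] [Fintype A] [Nonempty A] {H h : ℕ} {r : ℕ → S → A → ℝ}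
  {p : ℕ → S → A → S → ℝ} {π : ℕ → S → A}

theorem Vpi_le_Vstar (hp : ∀ h s a s', 0 ≤ p h s a s') (hH : h ≤ H + 1) (s : S) :
    Vpi H r p π h s ≤ Vstar H r p h s :=
  le_of_backward_subsolution_of_supersolution
    (q := fun k x => p k x (π k x)) (g := fun k x => r k x (π k x)) (fun k x => hp k x (π k x))
    (fun _ _ hk x => (Vpi_eq_add_sum hk x).le)
    (fun k _ hk x => Qstar_le_Vstar hk x (π k x))
    (fun x => (Vpi_horizon_succ x).trans_le (Vstar_horizon_succ x).ge) hH s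

theorem Vpi_le_Qstar (hp : ∀ h s a s', 0 ≤ p h s a s') (hH : h ≤ H) (s : S) :
    Vpi H r p π h s ≤ Qstar H r p h s (π h s) := by
  rw [Vpi_eq_add_sum hH, Qstar]
  gcongr with s'
  · exact hp h s (π h s) s'
  · exact Vpi_le_Vstar hp (Nat.succ_le_succ hH) s'

theorem gap_le_Vstar_sub_Vpi (hp : ∀ h s a s', 0 ≤ p h s a s') (hH : h ≤ H) (s : S) :
    gap H r p h s (π h s) ≤ Vstar H r p h s - Vpi H r p π h s :=
  sub_le_sub_left (Vpi_le_Qstar hp hH s) _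

theorem gap_le_cumul_add {V b : ℕ → S → ℝ} {ε : ℝ} {s : S} (hp : ∀ h s a s', 0 ≤ p h s a s')
    (hVend : ∀ s, V (H + 1) s = 0)
    (hconf : ∀ k, h ≤ k → k ≤ H → ∀ s, V k s - Vpi H r p π k s
      ≤ b k s + ∑ s', p k s (π k s) s' * (V (k + 1) s' - Vpi H r p π (k + 1) s'))
    (hH : h ≤ H) (hopt : Vstar H r p h s ≤ V h s + ε) :
    gap H r p h s (π h s) ≤ cumul H p π b h s + ε := by
  have hend (x : S) : V (H + 1) x - Vpi H r p π (H + 1) x ≤ 0 := by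
    rw [hVend, Vpi_horizon_succ, sub_zero]
  have hest : V h s - Vpi H r p π h s ≤ cumul H p π b h s :=
    le_cumul_of_le_add_sum (f := fun k x => V k x - Vpi H r p π k x) hp hconf hend
      (Nat.le_succ_of_le hH) s
  calc gap H r p h s (π h s) ≤ Vstar H r p h s - Vpi H r p π h s := gap_le_Vstar_sub_Vpi hp hH s
    _ ≤ (V h s - Vpi H r p π h s) + ε := by linarith
    _ ≤ cumul H p π b h s + ε := by gcongr

end GapBound

theorem stmt1_general {S A : Type*} [Fintype S] [Fintype A] [Nonempty A] (H : ℕ)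
    (r : ℕ → S → A → ℝ) (p : ℕ → S → A → S → ℝ) (hp : ∀ h s a s', 0 ≤ p h s a s')
    (πstar : ℕ → S → A)
    (hπstar : ∀ h, 1 ≤ h → h ≤ H → ∀ s, Qstar H r p h s (πstar h s) = Vstar H r p h s)
    (π : ℕ → S → A) (Qbar : ℕ → S → A → ℝ) (Vbar : ℕ → S → ℝ)
    (hVbar : ∀ h, 1 ≤ h → h ≤ H → ∀ s,
        Vbar h s = Finset.univ.sup' Finset.univ_nonempty fun a => Qbar h s a)
    (hVbarEnd : ∀ s, Vbar (H + 1) s = 0)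
    (b : ℕ → S → ℝ) (ε : ℕ → S → A → ℝ)
    (hglobal : ∀ s, Vstar H r p 1 s ≤ Vbar 1 s)
    (hlocal : ∀ h, 2 ≤ h → h ≤ H → ∀ s a, Qstar H r p h s a ≤ Qbar h s a + ε h s a)
    (hconf : ∀ h, 1 ≤ h → h ≤ H → ∀ s, Vbar h s - Vpi H r p π h s
      ≤ b h s + ∑ s', p h s (π h s) s' * (Vbar (h + 1) s' - Vpi H r p π (h + 1) s'))
    (h : ℕ) (h1 : 1 ≤ h) (hH : h ≤ H) (s : S) :
    gap H r p h s (π h s) ≤ cumul H p π b h s + (if 1 < h then ε h s (πstar h s) else 0) := by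
  refine gap_le_cumul_add hp hVbarEnd (fun k hk => hconf k (h1.trans hk)) hH ?_
  split_ifs with h2
  · have hQbar_le : Qbar h s (πstar h s) ≤ Vbar h s := by
      rw [hVbar h h1 hH s]
      exact Finset.le_sup' (Qbar h s) (Finset.mem_univ _)
    calc Vstar H r p h s = Qstar H r p h s (πstar h s) := (hπstar h h1 hH s).symm
      _ ≤ Qbar h s (πstar h s) + ε h s (πstar h s) := hlocal h h2 hH s _
      _ ≤ Vbar h s + ε h s (πstar h s) := by gcongr
  · obtain rfl : h = 1 := le_antisymm (not_lt.mp h2) h1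
    simpa only [add_zero] using hglobal s

theorem stmt1
    {S A : Type*} [Fintype S] [Fintype A] [Nonempty A] {d : ℕ}
    (H : ℕ) (hH : 1 ≤ H)
    (r : ℕ → S → A → ℝ) (p : ℕ → S → A → S → ℝ)
    (hp0 : ∀ h s a s', 0 ≤ p h s a s') (hp1 : ∀ h s a, ∑ s' : S, p h s a s' = 1)
    -- feature maps
    (φ : ℕ → S → A → Fin d → ℝ)
    -- an optimal policy: `π*_h(s)` attains the maximum of `Q*_h(s,·)`
    (πstar : ℕ → S → A)
    (hπstar : ∀ h, 1 ≤ h → h ≤ H → ∀ s, Qstar H r p h s (πstar h s) = Vstar H r p h s)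
    -- the algorithm's policy and optimistic estimates
    (π : ℕ → S → A)
    (Qbar : ℕ → S → A → ℝ) (Vbar : ℕ → S → ℝ)
    (hVbar : ∀ h, 1 ≤ h → h ≤ H → ∀ s,
        Vbar h s = Finset.univ.sup' Finset.univ_nonempty fun a => Qbar h s a)
    (hVbarEnd : ∀ s, Vbar (H + 1) s = 0)
    -- symmetric positive definite matrices, scalar β ≥ 0, constants C_h ≥ 0
    (Λ : ℕ → Matrix (Fin d) (Fin d) ℝ) (hΛ : ∀ h, (Λ h).PosDef)
    (β : ℝ) (hβ : 0 ≤ β) (C : ℕ → ℝ) (hC : ∀ h, 0 ≤ C h)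
    -- (a) greediness w.r.t. Q̄
    (hgreedy : ∀ h, 1 ≤ h → h ≤ H → ∀ s a, Qbar h s a ≤ Qbar h s (π h s))
    -- (b) global optimism
    (hglobal : ∀ s, Vstar H r p 1 s ≤ Vbar 1 s)
    -- (c) almost local optimism
    (hlocal : ∀ h, 2 ≤ h → h ≤ H → ∀ s a,
        Qstar H r p h s a ≤ Qbar h s a + C h * β * matNorm (Λ h)⁻¹ (φ h s a))
    -- (d) confidence-set property
    (hconf : ∀ h, 1 ≤ h → h ≤ H → ∀ s : S,
        Vbar h s - Vpi H r p π h s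
          ≤ 2 * β * matNorm (Λ h)⁻¹ (φ h s (π h s))
            + ∑ s' : S, p h s (π h s) s' * (Vbar (h + 1) s' - Vpi H r p π (h + 1) s')) :
    ∀ h, 1 ≤ h → h ≤ H → ∀ s : S,
      gap H r p h s (π h s)
        ≤ 2 * cumul H p π (fun i s' => β * matNorm (Λ i)⁻¹ (φ i s' (π i s'))) h s
          + (if 1 < h then C h * β * matNorm (Λ h)⁻¹ (φ h s (πstar h s)) else 0) := by
  simp only [← cumul_const_mul, ← mul_assoc]
  exact stmt1_general H r p hp0 πstar hπstar π Qbar Vbar hVbar hVbarEnd _ _ hglobal hlocal hconf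
end

section
/- Let {φ_j}_{j∈[n]} be a finite set of vectors in ℝ^d and let v ∈ ℝ^d be such that v does not belong to the linear span of {φ_j : j ∈ [n]}. Then there exists a scalar ε > 0 such that for every t ≥ 0 and every η > 0, ‖v‖_{(t Σ_{j∈[n]} φ_j φ_jᵀ + η I_d)^{-1}} ≥ ε / √η. -/
/-!
STATEMENT 3: if `v` is not in the span of the vectors `φ_j`, then there is an
`ε > 0` such that for all `t ≥ 0` and `η > 0`,
`‖v‖_{(t Σ_j φ_j φ_jᵀ + η I)⁻¹} ≥ ε / √η`.
-/

open Matrix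

/-!
Since `v` lies outside the span, some `w` orthogonal to every `φ i` has `v ⬝ᵥ w ≠ 0`. Whatever the
weights, `w` is an eigenvector of `A = ∑ i, c i • φ i (φ i)ᵀ + η • 1` with eigenvalue
`η`. The Cauchy–Schwarz inequality `|v ⬝ᵥ w| ≤ ‖v‖_{A⁻¹} ‖w‖_A` then reads
`|v ⬝ᵥ w| ≤ ‖v‖_{A⁻¹} √η √(w ⬝ᵥ w)`, so that `ε = |v ⬝ᵥ w| / √(w ⬝ᵥ w)` works.
-/

section CauchySchwarz

variable {m R : Type*} [Fintype m]

theorem sq_dotProduct_mulVec_le_of_posSemidef [CommRing R] [LinearOrder R] [IsStrictOrderedRing R]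
    [StarRing R] [TrivialStar R] {A : Matrix m m R} (hA : A.PosSemidef) (x y : m → R) :
    (x ⬝ᵥ A *ᵥ y) ^ 2 ≤ (x ⬝ᵥ A *ᵥ x) * (y ⬝ᵥ A *ᵥ y) := by
  classical
  have hsymm : LinearMap.IsSymm (toBilin' A) :=
    LinearMap.BilinForm.isSymm_iff.1 <|
      isSymm_toBilin'_iff_isSymm.2 (isHermitian_iff_isSymm.1 hA.isHermitian)
  have hnonneg (z : m → R) : 0 ≤ toBilin' A z z := by
    simpa only [toBilin'_apply', star_trivial] using hA.dotProduct_mulVec_nonneg z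
  simpa only [toBilin'_apply'] using
    LinearMap.BilinForm.apply_sq_le_of_symm (toBilin' A) hnonneg hsymm x y

theorem sq_dotProduct_le_inv_mul_of_posDef [DecidableEq m] [Field R] [LinearOrder R]
    [IsStrictOrderedRing R] [StarRing R] [TrivialStar R] {A : Matrix m m R} (hA : A.PosDef)
    (x y : m → R) :
    (x ⬝ᵥ y) ^ 2 ≤ (x ⬝ᵥ A⁻¹ *ᵥ x) * (y ⬝ᵥ A *ᵥ y) := by
  have hdet : IsUnit A.det := (isUnit_iff_isUnit_det A).1 hA.isUnit
  have hinv : A⁻¹ *ᵥ (A *ᵥ y) = y := by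
    rw [mulVec_mulVec, nonsing_inv_mul A hdet, one_mulVec]
  simpa only [hinv, dotProduct_comm (A *ᵥ y) y] using
    sq_dotProduct_mulVec_le_of_posSemidef hA.inv.posSemidef x (A *ᵥ y)

end CauchySchwarz

section MatNorm

variable {d : ℕ} {A : Matrix (Fin d) (Fin d) ℝ}

theorem abs_dotProduct_le_matNorm_inv_mul_matNorm (hA : A.PosDef) (x y : Fin d → ℝ) :
    |x ⬝ᵥ y| ≤ matNorm A⁻¹ x * matNorm A y := by
  have hx : 0 ≤ x ⬝ᵥ A⁻¹ *ᵥ x := by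
    simpa only [star_trivial] using hA.inv.posSemidef.dotProduct_mulVec_nonneg x
  rw [matNorm, matNorm, ← Real.sqrt_mul hx]
  exact Real.abs_le_sqrt (sq_dotProduct_le_inv_mul_of_posDef hA x y)

theorem matNorm_of_mulVec_eq_smul {c : ℝ} (hc : 0 ≤ c) {x : Fin d → ℝ} (hx : A *ᵥ x = c • x) :
    matNorm A x = √c * √(x ⬝ᵥ x) := by
  rw [matNorm, hx, dotProduct_smul, smul_eq_mul, Real.sqrt_mul hc]

end MatNorm

theorem exists_dotProduct_ne_zero_of_notMem {m K : Type*} [Fintype m] [Field K]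
    {p : Submodule K (m → K)} {v : m → K} (hv : v ∉ p) :
    ∃ w : m → K, v ⬝ᵥ w ≠ 0 ∧ ∀ x ∈ p, x ⬝ᵥ w = 0 := by
  classical
  obtain ⟨f, hfv, hpf⟩ := Submodule.exists_le_ker_of_notMem hv
  obtain ⟨w, rfl⟩ := (dotProductEquiv K m).surjective f
  refine ⟨w, ?_, fun x hx ↦ ?_⟩
  · rwa [dotProduct_comm]
  · rw [dotProduct_comm]
    exact hpf hx

section RegularizedGram

variable {ι m R : Type*} [DecidableEq m]

/-- The regularized Gram (design) matrix `∑ i ∈ s, c i • φ i (φ i)ᵀ + η • 1` of the vectors `φ i`.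
Constant weights `c i = t` give the matrix `t Σ_j φ_j φ_jᵀ + η I_d` whose inverse defines the norm
to be bounded below. -/
def regularizedGram [Semiring R] (s : Finset ι) (c : ι → R) (φ : ι → m → R) (η : R) :
    Matrix m m R :=
  ∑ i ∈ s, c i • vecMulVec (φ i) (φ i) + η • (1 : Matrix m m R)

theorem regularizedGram_posDef [Finite m] [CommRing R] [PartialOrder R] [IsStrictOrderedRing R]
    [NoZeroDivisors R] [StarRing R] [TrivialStar R] [StarOrderedRing R] {s : Finset ι} {c : ι → R}
    (hc : ∀ i ∈ s, 0 ≤ c i) (φ : ι → m → R) {η : R} (hη : 0 < η) :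
    (regularizedGram s c φ η).PosDef := by
  have hrank_one (i : ι) : (vecMulVec (φ i) (φ i)).PosSemidef := by
    simpa only [star_trivial] using posSemidef_vecMulVec_self_star (φ i)
  exact (PosDef.one.smul hη).posSemidef_add
    (posSemidef_sum s fun i hi ↦ (hrank_one i).smul (hc i hi))

theorem regularizedGram_mulVec_of_orthogonal [Fintype m] [CommSemiring R] {s : Finset ι}
    (c : ι → R) {φ : ι → m → R} (η : R) {w : m → R} (hw : ∀ i ∈ s, φ i ⬝ᵥ w = 0) :
    regularizedGram s c φ η *ᵥ w = η • w := by
  have hrank_one : ∀ i ∈ s, (c i • vecMulVec (φ i) (φ i)) *ᵥ w = 0 := fun i hi ↦ by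
    rw [smul_mulVec, vecMulVec_mulVec, hw i hi, MulOpposite.op_zero, zero_smul, smul_zero]
  rw [regularizedGram, add_mulVec, sum_mulVec, Finset.sum_eq_zero hrank_one, zero_add,
    smul_mulVec, one_mulVec]

end RegularizedGram

theorem stmt3_general {ι : Type*} {d : ℕ} (φ : ι → Fin d → ℝ) (v : Fin d → ℝ)
    (hv : v ∉ Submodule.span ℝ (Set.range φ)) :
    ∃ ε : ℝ, 0 < ε ∧ ∀ (s : Finset ι) (c : ι → ℝ), (∀ i ∈ s, 0 ≤ c i) → ∀ η : ℝ, 0 < η →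
      ε / √η ≤ matNorm (regularizedGram s c φ η)⁻¹ v := by
  obtain ⟨w, hvw, hw⟩ := exists_dotProduct_ne_zero_of_notMem hv
  have hw₀ : w ≠ 0 := by
    rintro rfl
    exact hvw (dotProduct_zero v)
  have hww : 0 < w ⬝ᵥ w := by simpa only [star_trivial] using dotProduct_self_star_pos_iff.2 hw₀
  refine ⟨|v ⬝ᵥ w| / √(w ⬝ᵥ w), by positivity, fun s c hc η hη ↦ ?_⟩
  have heigen : regularizedGram s c φ η *ᵥ w = η • w :=
    regularizedGram_mulVec_of_orthogonal c η fun i _ ↦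
      hw (φ i) (Submodule.subset_span (Set.mem_range_self i))
  rw [div_div, div_le_iff₀ (by positivity), mul_comm √(w ⬝ᵥ w),
    ← matNorm_of_mulVec_eq_smul hη.le heigen]
  exact abs_dotProduct_le_matNorm_inv_mul_matNorm (regularizedGram_posDef hc φ hη) v w

theorem stmt3 {d n : ℕ} (φ : Fin n → Fin d → ℝ) (v : Fin d → ℝ)
    (hv : v ∉ Submodule.span ℝ (Set.range φ)) :
    ∃ ε : ℝ, 0 < ε ∧ ∀ t : ℝ, 0 ≤ t → ∀ η : ℝ, 0 < η →
      ε / Real.sqrt η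
        ≤ matNorm
            (t • (∑ j : Fin n, Matrix.vecMulVec (φ j) (φ j))
              + η • (1 : Matrix (Fin d) (Fin d) ℝ))⁻¹ v := by
  obtain ⟨ε, hε, hbound⟩ := stmt3_general φ v hv
  exact ⟨ε, hε, fun t ht η hη ↦ by
    simpa only [regularizedGram, Finset.smul_sum] using
      hbound Finset.univ (fun _ ↦ t) (fun _ _ ↦ ht) η hη⟩
end

section
/- Let M ∈ ℝ^{d×d} be a nonzero symmetric positive semidefinite matrix all of whose eigenvalues are at most 1, and let λ⁺ denote its smallest nonzero eigenvalue. Let k > 0 and c < 0 be real numbers with kλ⁺ + c > 0. Then the matrix B := kM + c I_d is invertible, and for every unit vector x lying in the column space of M, √(xᵀ B^{-1} x) ≤ (k + c) / (kλ⁺ + c)^{3/2}. -/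
/-!
STATEMENT 6: for a nonzero symmetric PSD matrix `M` with eigenvalues ≤ 1 and
smallest nonzero eigenvalue `λ⁺`, and reals `k > 0`, `c < 0` with `kλ⁺ + c > 0`,
the matrix `B = kM + cI` is invertible and every unit vector `x` in the column
space of `M` satisfies `√(xᵀ B⁻¹ x) ≤ (k + c)/(kλ⁺ + c)^{3/2}`.
-/

open Matrix

/-!
If `x = M z` and `B = f(M)`, then `x* B⁻¹ x = z* (M B⁻¹ M) z`, and `M B⁻¹ M` is the function
`t² / f t` of `M`. When `f ≥ r > 0` on the nonzero part of the spectrum, `t² / f t ≤ t² / r` on the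
whole spectrum, because both sides vanish at `t = 0` whatever the sign of `f 0`. Hence
`M B⁻¹ M ≤ r⁻¹ M²`, that is, `x* B⁻¹ x ≤ r⁻¹ x* x`. Here `f t = k t + c` and `r = k λ⁺ + c`, and
`λ⁺ ≤ 1` gives `r ≤ k + c`.
-/

section FunctionalCalculus

open scoped Ring

variable {A : Type*} [TopologicalSpace A] [Ring A] [StarRing A] [Algebra ℝ A]
  [ContinuousFunctionalCalculus ℝ A IsSelfAdjoint] {a : A}

theorem cfc_const_mul_add_const (ha : IsSelfAdjoint a) (k c : ℝ) :
    cfc (fun t ↦ k * t + c) a = k • a + c • (1 : A) := by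
  rw [cfc_add_const c (k * ·) a, cfc_const_mul_id k a, Algebra.algebraMap_eq_smul_one]

theorem mul_inverse_cfc_mul_self_eq_cfc (ha : IsSelfAdjoint a) {f : ℝ → ℝ}
    (hf : ContinuousOn f (spectrum ℝ a)) (hf₀ : ∀ t ∈ spectrum ℝ a, f t ≠ 0) :
    a * (cfc f a)⁻¹ʳ * a = cfc (fun t ↦ t * (f t)⁻¹ * t) a := by
  have hf_inv : ContinuousOn (fun t ↦ (f t)⁻¹) (spectrum ℝ a) := hf.inv₀ hf₀
  rw [cfc_mul (fun t ↦ t * (f t)⁻¹) (fun t ↦ t) a, cfc_mul (fun t ↦ t) (fun t ↦ (f t)⁻¹) a,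
    cfc_id' ℝ a, cfc_inv f a hf₀]

theorem mul_inverse_cfc_mul_self_le [PartialOrder A] [StarOrderedRing A] (ha : IsSelfAdjoint a)
    {f : ℝ → ℝ} (hf : ContinuousOn f (spectrum ℝ a)) (hf₀ : ∀ t ∈ spectrum ℝ a, f t ≠ 0)
    {r : ℝ} (hr : 0 < r) (hrf : ∀ t ∈ spectrum ℝ a, t ≠ 0 → r ≤ f t) :
    a * (cfc f a)⁻¹ʳ * a ≤ r⁻¹ • (a * a) := by
  have hf_inv : ContinuousOn (fun t ↦ (f t)⁻¹) (spectrum ℝ a) := hf.inv₀ hf₀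
  have pointwise : ∀ t ∈ spectrum ℝ a, t * (f t)⁻¹ * t ≤ r⁻¹ * (t * t) := by
    intro t ht
    rcases eq_or_ne t 0 with rfl | ht₀
    · simp
    · calc t * (f t)⁻¹ * t = (f t)⁻¹ * (t * t) := by ring
        _ ≤ r⁻¹ * (t * t) :=
          mul_le_mul_of_nonneg_right (inv_anti₀ hr (hrf t ht ht₀)) (mul_self_nonneg t)
  calc a * (cfc f a)⁻¹ʳ * a = cfc (fun t ↦ t * (f t)⁻¹ * t) a :=
        mul_inverse_cfc_mul_self_eq_cfc ha hf hf₀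
    _ ≤ cfc (fun t ↦ r⁻¹ * (t * t)) a := cfc_mono pointwise
    _ = r⁻¹ • (a * a) := by
        rw [cfc_const_mul r⁻¹ (fun t ↦ t * t) a, cfc_mul (fun t ↦ t) (fun t ↦ t) a, cfc_id' ℝ a]

end FunctionalCalculus

section HermitianForm

open scoped MatrixOrder ComplexOrder

variable {𝕜 m n : Type*} [RCLike 𝕜] [Fintype m] [Fintype n]

theorem re_dotProduct_mulVec_mono {A B : Matrix n n 𝕜} (h : A ≤ B) (x : n → 𝕜) :
    RCLike.re (star x ⬝ᵥ (A *ᵥ x)) ≤ RCLike.re (star x ⬝ᵥ (B *ᵥ x)) := by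
  have : 0 ≤ RCLike.re (star x ⬝ᵥ ((B - A) *ᵥ x)) := (Matrix.le_iff.mp h).re_dotProduct_nonneg x
  rwa [sub_mulVec, dotProduct_sub, map_sub, sub_nonneg] at this

theorem star_mulVec_dotProduct_mulVec_mulVec (A : Matrix n m 𝕜) (B : Matrix n n 𝕜) (z : m → 𝕜) :
    star (A *ᵥ z) ⬝ᵥ (B *ᵥ (A *ᵥ z)) = star z ⬝ᵥ ((Aᴴ * B * A) *ᵥ z) := by
  rw [star_mulVec, ← dotProduct_mulVec, mulVec_mulVec, mulVec_mulVec, Matrix.mul_assoc]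

theorem re_dotProduct_mulVec_le_of_mem_range {A : Matrix n m 𝕜} {B : Matrix n n 𝕜} {s : ℝ}
    (h : Aᴴ * B * A ≤ s • (Aᴴ * A)) {x : n → 𝕜} (hx : x ∈ LinearMap.range A.mulVecLin) :
    RCLike.re (star x ⬝ᵥ (B *ᵥ x)) ≤ s * RCLike.re (star x ⬝ᵥ x) := by
  obtain ⟨z, rfl⟩ := hx
  rw [mulVecLin_apply]
  calc RCLike.re (star (A *ᵥ z) ⬝ᵥ (B *ᵥ (A *ᵥ z)))
      = RCLike.re (star z ⬝ᵥ ((Aᴴ * B * A) *ᵥ z)) := by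
        rw [star_mulVec_dotProduct_mulVec_mulVec]
    _ ≤ RCLike.re (star z ⬝ᵥ ((s • (Aᴴ * A)) *ᵥ z)) := re_dotProduct_mulVec_mono h z
    _ = s * RCLike.re (star z ⬝ᵥ ((Aᴴ * A) *ᵥ z)) := by
        rw [smul_mulVec, dotProduct_smul, RCLike.smul_re]
    _ = s * RCLike.re (star (A *ᵥ z) ⬝ᵥ (A *ᵥ z)) := by
        rw [star_mulVec, ← dotProduct_mulVec, mulVec_mulVec]

variable [DecidableEq n] {M : Matrix n n 𝕜}

theorem re_dotProduct_inv_cfc_mulVec_le (hM : M.IsHermitian) {f : ℝ → ℝ}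
    (hf₀ : ∀ t ∈ spectrum ℝ M, f t ≠ 0) {r : ℝ} (hr : 0 < r)
    (hrf : ∀ t ∈ spectrum ℝ M, t ≠ 0 → r ≤ f t) {x : n → 𝕜}
    (hx : x ∈ LinearMap.range M.mulVecLin) :
    RCLike.re (star x ⬝ᵥ ((cfc f M)⁻¹ *ᵥ x)) ≤ r⁻¹ * RCLike.re (star x ⬝ᵥ x) := by
  refine re_dotProduct_mulVec_le_of_mem_range ?_ hx
  rw [hM.eq, nonsing_inv_eq_ringInverse]
  exact mul_inverse_cfc_mul_self_le hM.isSelfAdjoint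
    (M.finite_real_spectrum.continuousOn f) hf₀ hr hrf

theorem stmt6_general (hM : M.IsHermitian) {lam : ℝ}
    (hlam : ∀ i, hM.eigenvalues i ≠ 0 → lam ≤ hM.eigenvalues i)
    {k c : ℝ} (hk : 0 ≤ k) (hc : c ≠ 0) (hkc : 0 < k * lam + c) :
    IsUnit (k • M + c • (1 : Matrix n n 𝕜)) ∧
      ∀ x : n → 𝕜, star x ⬝ᵥ x = 1 → x ∈ LinearMap.range M.mulVecLin →
        √(RCLike.re (star x ⬝ᵥ ((k • M + c • (1 : Matrix n n 𝕜))⁻¹ *ᵥ x)))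
          ≤ (√(k * lam + c))⁻¹ := by
  have lower : ∀ t ∈ spectrum ℝ M, t ≠ 0 → k * lam + c ≤ k * t + c := by
    rw [hM.spectrum_real_eq_range_eigenvalues]
    rintro _ ⟨i, rfl⟩ hi
    gcongr
    exact hlam i hi
  have ne_zero : ∀ t ∈ spectrum ℝ M, k * t + c ≠ 0 := by
    intro t ht
    rcases eq_or_ne t 0 with rfl | ht₀
    · simpa only [mul_zero, zero_add] using hc
    · exact (hkc.trans_le (lower t ht ht₀)).ne'
  rw [← cfc_const_mul_add_const hM.isSelfAdjoint k c]
  refine ⟨(isUnit_cfc_iff _ M).mpr ne_zero, fun x hx hxM ↦ ?_⟩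
  rw [← Real.sqrt_inv]
  refine Real.sqrt_le_sqrt ?_
  simpa only [hx, RCLike.one_re, mul_one] using
    re_dotProduct_inv_cfc_mulVec_le hM ne_zero hkc lower hxM

end HermitianForm

theorem inv_sqrt_le_div_rpow_three_halves {r s : ℝ} (hr : 0 < r) (hrs : r ≤ s) :
    (√r)⁻¹ ≤ s / r ^ ((3 : ℝ) / 2) := by
  have hpow : r ^ ((3 : ℝ) / 2) = r * √r := by
    rw [Real.sqrt_eq_rpow, ← Real.rpow_one_add' hr.le] <;> norm_num
  calc (√r)⁻¹ = r / r ^ ((3 : ℝ) / 2) := by rw [hpow]; field_simp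
    _ ≤ s / r ^ ((3 : ℝ) / 2) := by gcongr

theorem stmt6 {d : ℕ} (M : Matrix (Fin d) (Fin d) ℝ)
    (hM : M.PosSemidef) (hM0 : M ≠ 0)
    (heig : ∀ i, hM.1.eigenvalues i ≤ 1)
    (lam : ℝ)
    -- `lam` is the smallest nonzero eigenvalue of `M`
    (hlam : IsLeast {x : ℝ | x ≠ 0 ∧ ∃ i, hM.1.eigenvalues i = x} lam)
    (k c : ℝ) (hk : 0 < k) (hc : c < 0) (hkc : 0 < k * lam + c) :
    IsUnit (k • M + c • (1 : Matrix (Fin d) (Fin d) ℝ))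
    ∧ ∀ x : Fin d → ℝ, x ⬝ᵥ x = 1 → x ∈ LinearMap.range M.mulVecLin →
        Real.sqrt (x ⬝ᵥ (k • M + c • (1 : Matrix (Fin d) (Fin d) ℝ))⁻¹.mulVec x)
          ≤ (k + c) / (k * lam + c) ^ ((3 : ℝ) / 2) := by
  obtain ⟨⟨-, i, hi⟩, lam_le⟩ := hlam
  have lam_le_one : lam ≤ 1 := hi ▸ heig i
  have hle : k * lam + c ≤ k + c := by linarith [mul_le_of_le_one_right hk.le lam_le_one]
  obtain ⟨hunit, hbound⟩ := stmt6_general hM.1 (fun j hj ↦ lam_le ⟨hj, j, rfl⟩) hk.le hc.ne hkc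
  exact ⟨hunit, fun x hx hxM ↦
    (hbound x hx hxM).trans (inv_sqrt_le_div_rpow_three_halves hkc hle)⟩
end

section
/- Let S be a nonempty set, A a nonempty finite set, and let φ_1,…,φ_N : S × A → ℝ^d be feature maps with ‖φ_j(s,a)‖₂ ≤ 1 for all j ∈ [N] and (s,a) ∈ S × A. Fix constants H > 0, L > 0, B > 0, λ > 0. Let 𝒱 be the class of functions V : S → ℝ of the parametric form V(s) = min( min_{j∈[N]} max_{a∈A} [ ⟨w_j, φ_j(s,a)⟩ + β √(φ_j(s,a)ᵀ Λ_j^{-1} φ_j(s,a)) ] , H ), where the parameters satisfy ‖w_j‖₂ ≤ L for all j, β ∈ [0, B], and each Λ_j is a symmetric positive definite d×d matrix whose minimum eigenvalue is at least λ. For ε > 0, let 𝒩_ε be the ε-covering number of 𝒱 with respect to the distance dist(V, V') = sup_{s∈S} |V(s) − V'(s)|, i.e., the minimal cardinality of a set 𝒞 of functions S → ℝ such that every V ∈ 𝒱 satisfies dist(V, V') ≤ ε for some V' ∈ 𝒞. Then log 𝒩_ε ≤ N ( d log(1 + 4L/ε) + d² log(1 + 8 d^{1/2} B² / (λ ε²))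 ). -/
/-!
STATEMENT 7: covering-number bound for the LSVI-LEADER optimistic value
function class: `log 𝒩_ε ≤ N (d log(1 + 4L/ε) + d² log(1 + 8√d B²/(λ ε²)))`.
(The bound on the minimal cardinality `𝒩_ε` is expressed by exhibiting an
ε-cover `C` with `log |C|` at most the claimed bound.)
-/

open Finset Matrix

/-- The parametric optimistic value function
`V(s) = min( min_j max_a [⟨w_j, φ_j(s,a)⟩ + β √(φ_j(s,a)ᵀ Λ_j⁻¹ φ_j(s,a))], H )`. -/
noncomputable def Vform {S A : Type*} [Fintype A] [Nonempty A] {d N : ℕ} [NeZero N]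
    (Hc : ℝ) (φ : Fin N → S × A → Fin d → ℝ)
    (w : Fin N → Fin d → ℝ) (β : ℝ) (Λ : Fin N → Matrix (Fin d) (Fin d) ℝ)
    (s : S) : ℝ :=
  min
    (Finset.univ.inf' Finset.univ_nonempty fun j : Fin N =>
      Finset.univ.sup' Finset.univ_nonempty fun a : A =>
        w j ⬝ᵥ φ j (s, a)
          + β * Real.sqrt (φ j (s, a) ⬝ᵥ (Λ j)⁻¹.mulVec (φ j (s, a))))
    Hc

/-!
Write the bonus `β √⟪v, Λ⁻¹ v⟫` as `√⟪v, T v⟫` with `T = β² Λ⁻¹`, an operator of norm at most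
`B² / λ`. Since `|√x - √y| ≤ √|x - y|` and minima and suprema are 1-Lipschitz for the sup norm,
replacing each `w j` by a point at distance `ε / 2` and each `T j` by an operator at distance
`(ε / 2)²` changes the value function by at most `ε`. So it suffices to cover a ball of a
`d`-dimensional space and a ball of the `d²`-dimensional space of operators, and a volume
comparison covers a ball of radius `R` in dimension `n` by `(1 + 2 R / r) ^ n` balls of radius
`r`. Measuring `T` in operator norm rather than in Frobenius norm even saves the factor `√d`.
-/

section BallCovering

open Metric MeasureTheory Module
open scoped NNReal

variable {E : Type*} [NormedAddCommGroup E] [NormedSpace ℝ E] [FiniteDimensional ℝ E]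

theorem card_le_of_isSeparated_of_subset_closedBall {x : E} {R r : ℝ≥0} (hr : 0 < r)
    {s : Finset E} (hs : (s : Set E) ⊆ closedBall x R) (hsep : IsSeparated r (s : Set E)) :
    (s.card : ℝ) ≤ (1 + 2 * R / r) ^ finrank ℝ E := by
  borelize E
  let μ : Measure E := Measure.addHaar
  have hδ : (0 : ℝ) < r / 2 := by positivity
  have hρ : (0 : ℝ) < R + r / 2 := by positivity
  have disjoint_balls : (s : Set E).PairwiseDisjoint fun c => ball c (r / 2 : ℝ) := by
    intro c hc c' hc' hne
    refine ball_disjoint_ball ?_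
    have : (r : ℝ) < dist c c' := by
      have : (r : ENNReal) < edist c c' := hsep hc hc' hne
      rwa [edist_nndist, ENNReal.coe_lt_coe, ← NNReal.coe_lt_coe, coe_nndist] at this
    linarith
  have balls_subset : ⋃ c ∈ s, ball c (r / 2 : ℝ) ⊆ ball x (R + r / 2) :=
    Set.iUnion₂_subset fun c hc => ball_subset_ball' (by linarith [mem_closedBall.1 (hs hc)])
  have volume_le : s.card * ENNReal.ofReal ((r / 2 : ℝ) ^ finrank ℝ E) * μ (ball 0 1)
      ≤ ENNReal.ofReal ((R + r / 2 : ℝ) ^ finrank ℝ E) * μ (ball 0 1) :=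
    calc s.card * ENNReal.ofReal ((r / 2 : ℝ) ^ finrank ℝ E) * μ (ball 0 1)
        = μ (⋃ c ∈ s, ball c (r / 2 : ℝ)) := by
          rw [measure_biUnion_finset disjoint_balls fun _ _ => measurableSet_ball]
          simp only [μ.addHaar_ball_of_pos _ hδ, sum_const, nsmul_eq_mul, mul_assoc]
      _ ≤ μ (ball x (R + r / 2)) := measure_mono balls_subset
      _ = _ := μ.addHaar_ball_of_pos _ hρ
  have card_mul_le : (s.card : ℝ) * (r / 2 : ℝ) ^ finrank ℝ E ≤ (R + r / 2 : ℝ) ^ finrank ℝ E := by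
    have := ENNReal.toReal_le_of_le_ofReal (by positivity) <|
      (ENNReal.mul_le_mul_iff_left (measure_ball_pos μ _ one_pos).ne' measure_ball_lt_top.ne).1
        volume_le
    rwa [ENNReal.toReal_mul, ENNReal.toReal_natCast, ENNReal.toReal_ofReal (by positivity)] at this
  have ratio : (1 + 2 * R / r : ℝ) = (R + r / 2) / (r / 2) := by field_simp; ring
  rwa [ratio, div_pow, le_div_iff₀ (by positivity)]

theorem packingNumber_closedBall_le (x : E) (R : ℝ≥0) {r : ℝ≥0} (hr : 0 < r) :
    packingNumber r (closedBall x R) ≤ ⌊(1 + 2 * R / r : ℝ) ^ finrank ℝ E⌋₊ := by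
  refine iSup₂_le fun s hs => iSup_le fun hsep => ?_
  by_contra! hlt
  obtain ⟨t, hts, ht⟩ := Set.exists_subset_encard_eq (Order.add_one_le_of_lt hlt)
  lift t to Finset E using Set.finite_of_encard_eq_coe (k := _ + 1) ht
  have card_le := Nat.le_floor
    (card_le_of_isSeparated_of_subset_closedBall hr (hts.trans hs) (hsep.subset hts))
  rw [Set.encard_coe_eq_coe_finsetCard] at ht
  have : t.card = ⌊(1 + 2 * R / r : ℝ) ^ finrank ℝ E⌋₊ + 1 := by exact_mod_cast ht
  omega

theorem exists_finset_closedBall_subset_biUnion_closedBall (x : E) {R r : ℝ} (hR : 0 ≤ R)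
    (hr : 0 < r) :
    ∃ t : Finset E, closedBall x R ⊆ ⋃ y ∈ t, closedBall y r ∧
      (t.card : ℝ) ≤ (1 + 2 * R / r) ^ finrank ℝ E := by
  lift R to ℝ≥0 using hR
  lift r to ℝ≥0 using hr.le
  have covering_le := (coveringNumber_le_packingNumber r (closedBall x R)).trans
    (packingNumber_closedBall_le x R (mod_cast hr))
  obtain ⟨t, -, ht_finite, ht_cover, ht_card⟩ :=
    exists_set_encard_eq_coveringNumber (ne_top_of_le_ne_top (ENat.natCast_ne_top _) covering_le)
  lift t to Finset E using ht_finite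
  refine ⟨t, isCover_iff_subset_iUnion_closedBall.1 ht_cover, ?_⟩
  rw [← ht_card, Set.encard_coe_eq_coe_finsetCard, Nat.cast_le] at covering_le
  exact (Nat.le_floor_iff (by positivity)).1 covering_le

theorem finrank_continuousLinearMap_self : finrank ℝ (E →L[ℝ] E) = finrank ℝ E ^ 2 := by
  rw [← LinearMap.toContinuousLinearMap.finrank_eq, finrank_linearMap, sq]

end BallCovering

section RealBounds

theorem abs_sqrt_sub_sqrt_le_sqrt_abs_sub (x y : ℝ) : |√x - √y| ≤ √|x - y| := by
  have sqrt_le (a b : ℝ) : √a ≤ √b + √|a - b| := by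
    refine Real.sqrt_le_iff.2 ⟨by positivity, ?_⟩
    have hb : b ≤ √b ^ 2 := (Real.sqrt_le_iff.1 le_rfl).2
    have hab : √|a - b| ^ 2 = |a - b| := Real.sq_sqrt (abs_nonneg _)
    nlinarith [le_abs_self (a - b), Real.sqrt_nonneg b, Real.sqrt_nonneg |a - b|]
  rw [abs_sub_le_iff, sub_le_iff_le_add', sub_le_iff_le_add']
  exact ⟨sqrt_le x y, abs_sub_comm x y ▸ sqrt_le y x⟩

variable {ι : Type*} [Nonempty ι] {f g : ι → ℝ} {ε : ℝ}

theorem abs_iSup_sub_iSup_le (hf : BddAbove (Set.range f)) (hg : BddAbove (Set.range g))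
    (h : ∀ i, |f i - g i| ≤ ε) : |(⨆ i, f i) - ⨆ i, g i| ≤ ε := by
  rw [abs_sub_le_iff, sub_le_iff_le_add', sub_le_iff_le_add']
  constructor <;> refine ciSup_le fun i => ?_
  · linarith [le_ciSup hg i, (abs_sub_le_iff.1 (h i)).1]
  · linarith [le_ciSup hf i, (abs_sub_le_iff.1 (h i)).2]

theorem abs_iInf_sub_iInf_le (hf : BddBelow (Set.range f)) (hg : BddBelow (Set.range g))
    (h : ∀ i, |f i - g i| ≤ ε) : |(⨅ i, f i) - ⨅ i, g i| ≤ ε := by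
  rw [abs_sub_le_iff, sub_le_comm, sub_le_comm (b := ⨅ i, f i)]
  constructor <;> refine le_ciInf fun i => ?_
  · linarith [ciInf_le hf i, (abs_sub_le_iff.1 (h i)).1]
  · linarith [ciInf_le hg i, (abs_sub_le_iff.1 (h i)).2]

theorem log_natCast_le_log {m : ℕ} {x : ℝ} (hx : 1 ≤ x) (hmx : m ≤ x) :
    Real.log m ≤ Real.log x := by
  rcases m.eq_zero_or_pos with rfl | hm
  · simpa using Real.log_nonneg hx
  · exact Real.log_le_log (mod_cast hm) hmx

end RealBounds

section OptimisticValue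

open scoped RealInnerProductSpace

variable {E : Type*} [NormedAddCommGroup E] [InnerProductSpace ℝ E]

/-- The optimistic score `⟪w, v⟫ + √⟪v, T v⟫` of a feature `v`. The paper's bonus
`β √⟪v, Λ⁻¹ v⟫` is the case `T = β² Λ⁻¹`; no positivity of `T` is assumed, and the bonus is `0`
where the quadratic form is negative. -/
noncomputable def ucbScore (w : E) (T : E →L[ℝ] E) (v : E) : ℝ :=
  ⟪w, v⟫ + √⟪v, T v⟫

theorem abs_inner_apply_self_le (T : E →L[ℝ] E) {v : E} (hv : ‖v‖ ≤ 1) : |⟪v, T v⟫| ≤ ‖T‖ :=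
  calc |⟪v, T v⟫| ≤ ‖v‖ * ‖T v‖ := abs_real_inner_le_norm _ _
    _ ≤ 1 * ‖T‖ := by gcongr; exact T.unit_le_opNorm v hv
    _ = ‖T‖ := one_mul _

theorem abs_inner_le_of_norm_le_one (w : E) {v : E} (hv : ‖v‖ ≤ 1) : |⟪w, v⟫| ≤ ‖w‖ :=
  (abs_real_inner_le_norm w v).trans (mul_le_of_le_one_right (norm_nonneg w) hv)

theorem ucbScore_le (w : E) (T : E →L[ℝ] E) {v : E} (hv : ‖v‖ ≤ 1) :
    ucbScore w T v ≤ ‖w‖ + √‖T‖ :=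
  add_le_add ((le_abs_self _).trans (abs_inner_le_of_norm_le_one w hv))
    (Real.sqrt_le_sqrt ((le_abs_self _).trans (abs_inner_apply_self_le T hv)))

theorem abs_ucbScore_sub_ucbScore_le (w w' : E) (T T' : E →L[ℝ] E) {v : E} (hv : ‖v‖ ≤ 1) :
    |ucbScore w T v - ucbScore w' T' v| ≤ ‖w - w'‖ + √‖T - T'‖ :=
  calc |ucbScore w T v - ucbScore w' T' v|
      = |⟪w - w', v⟫ + (√⟪v, T v⟫ - √⟪v, T' v⟫)| := by
        rw [ucbScore, ucbScore, inner_sub_left]; ring_nf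
    _ ≤ |⟪w - w', v⟫| + |√⟪v, T v⟫ - √⟪v, T' v⟫| := abs_add_le _ _
    _ ≤ |⟪w - w', v⟫| + √|⟪v, (T - T') v⟫| := by
        rw [_root_.sub_apply, inner_sub_right]
        gcongr
        exact abs_sqrt_sub_sqrt_le_sqrt_abs_sub _ _
    _ ≤ ‖w - w'‖ + √‖T - T'‖ := by
        gcongr
        · exact abs_inner_le_of_norm_le_one _ hv
        · exact abs_inner_apply_self_le _ hv

variable {S A J : Type*}

/-- The value function `s ↦ min (min_j sup_a ucbScore (w j) (T j) (φ j (s, a))) H`, a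
coordinate-free form of `Vform`. -/
noncomputable def optimisticValue (H : ℝ) (φ : J → S × A → E) (w : J → E) (T : J → E →L[ℝ] E)
    (s : S) : ℝ :=
  min (⨅ j, ⨆ a, ucbScore (w j) (T j) (φ j (s, a))) H

/-- The class of optimistic value functions with weights of norm at most `L` and bonus operators of
norm at most `K`. -/
def optimisticClass (H : ℝ) (φ : J → S × A → E) (L K : ℝ) : Set (S → ℝ) :=
  {V | ∃ (w : J → E) (T : J → E →L[ℝ] E),
    (∀ j, ‖w j‖ ≤ L) ∧ (∀ j, ‖T j‖ ≤ K) ∧ V = optimisticValue H φ w T}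

variable [Nonempty A] [Finite J] [Nonempty J]

theorem abs_optimisticValue_sub_optimisticValue_le (H : ℝ) {φ : J → S × A → E}
    (hφ : ∀ j sa, ‖φ j sa‖ ≤ 1) {w w' : J → E} {T T' : J → E →L[ℝ] E} {δ η : ℝ}
    (hw : ∀ j, ‖w j - w' j‖ ≤ δ) (hT : ∀ j, ‖T j - T' j‖ ≤ η) (s : S) :
    |optimisticValue H φ w T s - optimisticValue H φ w' T' s| ≤ δ + √η := by
  have scores_bddAbove (w : J → E) (T : J → E →L[ℝ] E) (j : J) :
      BddAbove (Set.range fun a => ucbScore (w j) (T j) (φ j (s, a))) :=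
    ⟨_, Set.forall_mem_range.2 fun a => ucbScore_le (w j) (T j) (hφ j (s, a))⟩
  have sup_close (j : J) : |(⨆ a, ucbScore (w j) (T j) (φ j (s, a)))
      - ⨆ a, ucbScore (w' j) (T' j) (φ j (s, a))| ≤ δ + √η :=
    abs_iSup_sub_iSup_le (scores_bddAbove w T j) (scores_bddAbove w' T' j) fun a =>
      (abs_ucbScore_sub_ucbScore_le _ _ _ _ (hφ j (s, a))).trans
        (add_le_add (hw j) (Real.sqrt_le_sqrt (hT j)))
  have inf_close := abs_iInf_sub_iInf_le (Set.finite_range _).bddBelow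
    (Set.finite_range _).bddBelow sup_close
  refine (abs_min_sub_min_le_max _ _ _ _).trans (max_le inf_close ?_)
  rw [sub_self, abs_zero]
  exact (abs_nonneg _).trans inf_close

end OptimisticValue

section Cover

open Metric Module

variable {E : Type*} [NormedAddCommGroup E] [InnerProductSpace ℝ E] [FiniteDimensional ℝ E]
  {S A J : Type*} [Nonempty A] [Fintype J] [Nonempty J]

theorem exists_finset_cover_optimisticClass (H : ℝ) {φ : J → S × A → E}
    (hφ : ∀ j sa, ‖φ j sa‖ ≤ 1) {L K ε : ℝ} (hL : 0 ≤ L) (hK : 0 ≤ K) (hε : 0 < ε) :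
    ∃ C : Finset (S → ℝ), (∀ V ∈ optimisticClass H φ L K, ∃ V' ∈ C, ∀ s, |V s - V' s| ≤ ε) ∧
      (C.card : ℝ) ≤ ((1 + 4 * L / ε) ^ finrank ℝ E
        * (1 + 8 * K / ε ^ 2) ^ finrank ℝ E ^ 2) ^ Fintype.card J := by
  classical
  obtain ⟨W, hW_cover, hW_card⟩ := exists_finset_closedBall_subset_biUnion_closedBall
    (0 : E) hL (half_pos hε)
  obtain ⟨𝒯, h𝒯_cover, h𝒯_card⟩ := exists_finset_closedBall_subset_biUnion_closedBall
    (0 : E →L[ℝ] E) hK (pow_pos (half_pos hε) 2)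
  let value (q : J → E × (E →L[ℝ] E)) : S → ℝ :=
    optimisticValue H φ (fun j => (q j).1) (fun j => (q j).2)
  refine ⟨(Fintype.piFinset fun _ => W ×ˢ 𝒯).image value, ?_, ?_⟩
  · rintro _ ⟨w, T, hw, hT, rfl⟩
    have near_w (j : J) : ∃ y ∈ W, ‖w j - y‖ ≤ ε / 2 := by
      simpa [dist_eq_norm] using hW_cover (mem_closedBall_zero_iff.2 (hw j))
    have near_T (j : J) : ∃ U ∈ 𝒯, ‖T j - U‖ ≤ (ε / 2) ^ 2 := by
      simpa [dist_eq_norm] using h𝒯_cover (mem_closedBall_zero_iff.2 (hT j))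
    choose w' hw'_mem hw' using near_w
    choose T' hT'_mem hT' using near_T
    refine ⟨value fun j => (w' j, T' j), mem_image_of_mem _ ?_, fun s => ?_⟩
    · exact Fintype.mem_piFinset.2 fun j => mk_mem_product (hw'_mem j) (hT'_mem j)
    · have := abs_optimisticValue_sub_optimisticValue_le H hφ hw' hT' s
      rwa [Real.sqrt_sq (half_pos hε).le, add_halves] at this
  · rw [show 2 * L / (ε / 2) = 4 * L / ε by field_simp; ring] at hW_card
    rw [show 2 * K / (ε / 2) ^ 2 = 8 * K / ε ^ 2 by field_simp; ring,
      finrank_continuousLinearMap_self] at h𝒯_card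
    calc (((Fintype.piFinset fun _ => W ×ˢ 𝒯).image value).card : ℝ)
        ≤ (Fintype.piFinset fun _ : J => W ×ˢ 𝒯).card := mod_cast card_image_le
      _ = (W.card * 𝒯.card : ℝ) ^ Fintype.card J := by
          simp only [Fintype.card_piFinset, prod_const, card_univ, card_product, Nat.cast_pow,
            Nat.cast_mul]
      _ ≤ _ := by gcongr

theorem stmt7_general (H : ℝ) {φ : J → S × A → E} (hφ : ∀ j sa, ‖φ j sa‖ ≤ 1) {L K ε : ℝ}
    (hL : 0 ≤ L) (hK : 0 ≤ K) (hε : 0 < ε) :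
    ∃ C : Finset (S → ℝ), (∀ V ∈ optimisticClass H φ L K, ∃ V' ∈ C, ∀ s, |V s - V' s| ≤ ε) ∧
      Real.log C.card ≤ Fintype.card J * (finrank ℝ E * Real.log (1 + 4 * L / ε)
        + finrank ℝ E ^ 2 * Real.log (1 + 8 * K / ε ^ 2)) := by
  obtain ⟨C, hC_cover, hC_card⟩ := exists_finset_cover_optimisticClass H hφ hL hK hε
  refine ⟨C, hC_cover, ?_⟩
  have one_le_w : 1 ≤ 1 + 4 * L / ε := le_add_of_nonneg_right (by positivity)
  have one_le_T : 1 ≤ 1 + 8 * K / ε ^ 2 := le_add_of_nonneg_right (by positivity)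
  calc Real.log C.card
      ≤ Real.log (((1 + 4 * L / ε) ^ finrank ℝ E
          * (1 + 8 * K / ε ^ 2) ^ finrank ℝ E ^ 2) ^ Fintype.card J) :=
        log_natCast_le_log (one_le_pow₀ (one_le_mul_of_one_le_of_one_le
          (one_le_pow₀ one_le_w) (one_le_pow₀ one_le_T))) hC_card
    _ = _ := by
        rw [Real.log_pow, Real.log_mul (by positivity) (by positivity), Real.log_pow, Real.log_pow,
          Nat.cast_pow]

end Cover

section MatrixForm

open WithLp
open scoped RealInnerProductSpace

theorem norm_le_inv_of_coercive_of_rightInverse {E : Type*} [NormedAddCommGroup E]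
    [InnerProductSpace ℝ E] {T R : E →L[ℝ] E} {c : ℝ} (hc : 0 < c)
    (hT : ∀ x, c * ‖x‖ ^ 2 ≤ ⟪x, T x⟫) (hTR : ∀ x, T (R x) = x) : ‖R‖ ≤ c⁻¹ := by
  refine R.opNorm_le_bound (by positivity) fun x => ?_
  have h : c * ‖R x‖ ^ 2 ≤ ‖R x‖ * ‖x‖ :=
    calc c * ‖R x‖ ^ 2 ≤ ⟪R x, x⟫ := by simpa only [hTR] using hT (R x)
      _ ≤ ‖R x‖ * ‖x‖ := real_inner_le_norm _ _
  rw [inv_mul_eq_div, le_div_iff₀ hc]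
  rcases (norm_nonneg (R x)).eq_or_lt with h0 | hpos
  · rw [← h0, zero_mul]
    exact norm_nonneg x
  · exact le_of_mul_le_mul_left (by linarith) hpos

variable {n : Type*} [Fintype n]

theorem norm_toLp_eq_sqrt_dotProduct (v : n → ℝ) : ‖toLp 2 v‖ = √(v ⬝ᵥ v) := by
  rw [norm_eq_sqrt_real_inner, EuclideanSpace.inner_toLp_toLp, star_trivial]

variable [DecidableEq n]

theorem norm_toEuclideanCLM_inv_le {Λ : Matrix n n ℝ} {c : ℝ} (hc : 0 < c)
    (hΛc : (Λ - c • (1 : Matrix n n ℝ)).PosSemidef) :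
    ‖toEuclideanCLM (𝕜 := ℝ) Λ⁻¹‖ ≤ c⁻¹ := by
  refine norm_le_inv_of_coercive_of_rightInverse (T := toEuclideanCLM (𝕜 := ℝ) Λ) hc
    (fun x => ?_) fun x => ?_
  · have := hΛc.dotProduct_mulVec_nonneg (ofLp x)
    rw [sub_mulVec, smul_mulVec, one_mulVec, dotProduct_sub, dotProduct_smul, star_trivial,
      smul_eq_mul, sub_nonneg] at this
    rw [inner_toEuclideanCLM, ← real_inner_self_eq_norm_sq]
    exact this
  · have hΛ : Λ.PosDef := by simpa using (PosDef.one.smul hc).posSemidef_add hΛc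
    have hdet : IsUnit Λ.det := (isUnit_iff_isUnit_det Λ).1 hΛ.isUnit
    rw [← mul_apply_eq_comp, ← map_mul, mul_nonsing_inv Λ hdet, map_one, one_apply_eq_self]

theorem ucbScore_toLp_sq_smul {β : ℝ} (hβ : 0 ≤ β) (w v : n → ℝ) (M : Matrix n n ℝ) :
    ucbScore (toLp 2 w) (β ^ 2 • toEuclideanCLM (𝕜 := ℝ) M) (toLp 2 v)
      = w ⬝ᵥ v + β * √(v ⬝ᵥ M *ᵥ v) := by
  rw [ucbScore, _root_.smul_apply, real_inner_smul_right, inner_toEuclideanCLM,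
    Real.sqrt_mul (sq_nonneg β), Real.sqrt_sq hβ, EuclideanSpace.inner_toLp_toLp, star_trivial,
    dotProduct_comm]

variable {S A : Type*} [Fintype A] [Nonempty A] {d N : ℕ} [NeZero N]

theorem Vform_eq_optimisticValue (H : ℝ) (φ : Fin N → S × A → Fin d → ℝ) (w : Fin N → Fin d → ℝ)
    {β : ℝ} (hβ : 0 ≤ β) (Λ : Fin N → Matrix (Fin d) (Fin d) ℝ) :
    Vform H φ w β Λ = optimisticValue H (fun j sa => toLp 2 (φ j sa)) (fun j => toLp 2 (w j))
      (fun j => β ^ 2 • toEuclideanCLM (𝕜 := ℝ) (Λ j)⁻¹) := by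
  funext s
  simp only [Vform, optimisticValue, ucbScore_toLp_sq_smul hβ, inf'_univ_eq_ciInf,
    sup'_univ_eq_ciSup]

theorem Vform_mem_optimisticClass (H : ℝ) (φ : Fin N → S × A → Fin d → ℝ)
    {w : Fin N → Fin d → ℝ} {β : ℝ} {Λ : Fin N → Matrix (Fin d) (Fin d) ℝ} {L B lam : ℝ}
    (hlam : 0 < lam) (hw : ∀ j, √(w j ⬝ᵥ w j) ≤ L) (hβ : 0 ≤ β) (hβB : β ≤ B)
    (hΛ : ∀ j, (Λ j - lam • (1 : Matrix (Fin d) (Fin d) ℝ)).PosSemidef) :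
    Vform H φ w β Λ ∈ optimisticClass H (fun j sa => toLp 2 (φ j sa)) L (B ^ 2 / lam) := by
  refine ⟨_, _, fun j => ?_, fun j => ?_, Vform_eq_optimisticValue H φ w hβ Λ⟩
  · rw [norm_toLp_eq_sqrt_dotProduct]
    exact hw j
  · rw [norm_smul, Real.norm_of_nonneg (sq_nonneg β), div_eq_mul_inv]
    gcongr
    exact norm_toEuclideanCLM_inv_le hlam (hΛ j)

end MatrixForm

theorem sq_mul_log_one_add_le_sq_mul_log_one_add_sqrt_mul (d : ℕ) {x : ℝ} (hx : 0 ≤ x) :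
    (d : ℝ) ^ 2 * Real.log (1 + x) ≤ d ^ 2 * Real.log (1 + √d * x) := by
  rcases d.eq_zero_or_pos with rfl | hd
  · simp
  · have one_le_sqrt : 1 ≤ √(d : ℝ) := Real.one_le_sqrt.2 (mod_cast hd)
    gcongr
    exact le_mul_of_one_le_left hx one_le_sqrt

theorem stmt7 {S A : Type*} [Nonempty S] [Fintype A] [Nonempty A]
    {d N : ℕ} [NeZero N]
    (φ : Fin N → S × A → Fin d → ℝ)
    (hφ : ∀ j sa, Real.sqrt (φ j sa ⬝ᵥ φ j sa) ≤ 1)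
    (Hc L B lam : ℝ) (hHc : 0 < Hc) (hL : 0 < L) (hB : 0 < B) (hlam : 0 < lam)
    (ε : ℝ) (hε : 0 < ε)
    (𝒱 : Set (S → ℝ))
    (h𝒱 : 𝒱 = {V | ∃ (w : Fin N → Fin d → ℝ) (β : ℝ)
        (Λ : Fin N → Matrix (Fin d) (Fin d) ℝ),
        (∀ j, Real.sqrt (w j ⬝ᵥ w j) ≤ L) ∧ 0 ≤ β ∧ β ≤ B
        ∧ (∀ j, (Λ j).PosDef
            ∧ (Λ j - lam • (1 : Matrix (Fin d) (Fin d) ℝ)).PosSemidef)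
        ∧ V = Vform Hc φ w β Λ}) :
    ∃ C : Set (S → ℝ), C.Finite
      ∧ (∀ V ∈ 𝒱, ∃ V' ∈ C, ∀ s, |V s - V' s| ≤ ε)
      ∧ Real.log C.ncard
          ≤ N * (d * Real.log (1 + 4 * L / ε)
              + d ^ 2 * Real.log (1 + 8 * Real.sqrt d * B ^ 2 / (lam * ε ^ 2))) := by
  obtain ⟨C, hC_cover, hC_log⟩ := stmt7_general Hc
    (fun j sa => (norm_toLp_eq_sqrt_dotProduct (φ j sa)).trans_le (hφ j sa)) hL.le
    (by positivity : 0 ≤ B ^ 2 / lam) hε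
  simp only [Fintype.card_fin, finrank_euclideanSpace] at hC_log
  refine ⟨C, C.finite_toSet, ?_, (Set.ncard_coe_finset C).symm ▸ hC_log.trans ?_⟩
  · rw [h𝒱]
    rintro _ ⟨w, β, Λ, hw, hβ, hβB, hΛ, rfl⟩
    exact hC_cover _ (Vform_mem_optimisticClass Hc φ hlam hw hβ hβB fun j => (hΛ j).2)
  · rw [show 8 * √d * B ^ 2 / (lam * ε ^ 2) = √d * (8 * (B ^ 2 / lam) / ε ^ 2) by field_simp]
    gcongr ?_ * (_ + ?_)
    exact sq_mul_log_one_add_le_sq_mul_log_one_add_sqrt_mul d (by positivity)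
end

section
/- Consider a finite-horizon MDP with low-rank structure: there are feature maps φ_h : S × A → ℝ^d, vectors θ_h ∈ ℝ^d, and maps μ_h : S → ℝ^d such that r_h(s,a) = ⟨φ_h(s,a), θ_h⟩ and p_h(s'|s,a) = ⟨φ_h(s,a), μ_h(s')⟩ for all s, a, s', h. Then: (i) for every deterministic policy π and every h ∈ {1,…,H}, there exists θ^π_h ∈ ℝ^d such that Q^π_h(s,a) = ⟨φ_h(s,a), θ^π_h⟩ for all (s,a) ∈ S × A; and (ii) for every h ∈ {1,…,H}, there exists θ^⋆_h ∈ ℝ^d such that Q*_h(s,a) = ⟨φ_h(s,a), θ^⋆_h⟩ for all (s,a) ∈ S × A. -/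
/-!
STATEMENT 9: in a low-rank MDP (`r_h(s,a) = ⟨φ_h(s,a), θ_h⟩`,
`p_h(s'|s,a) = ⟨φ_h(s,a), μ_h(s')⟩`), the Q-function of every policy, and the
optimal Q-function, are linear in the features at every stage `h ∈ [1,H]`.
-/

open Finset Matrix

variable {S A : Type*}

section MDP
variable [Fintype S] [Fintype A] [Nonempty A]

noncomputable def Qpi (H : ℕ) (r : ℕ → S → A → ℝ) (p : ℕ → S → A → S → ℝ)
    (π : ℕ → S → A) (h : ℕ) (s : S) (a : A) : ℝ :=
  r h s a + ∑ s' : S, p h s a s' * Vpi H r p π (h + 1) s'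

end MDP

section BellmanBackup
variable {R M : Type*} [CommSemiring R] [AddCommMonoid M] [Module R M] [Fintype S]

/-- The Bellman backup `(s, a) ↦ r(s, a) + ∑ s', p(s' | s, a) V(s')` of a function `V` on states
through one stage. -/
def bellmanBackup (r : S → A → R) (p : S → A → S → R) (V : S → R) (s : S) (a : A) : R :=
  r s a + ∑ s', p s a s' * V s'

/-- The weight vector `θ + ∑ s', V(s') μ(s')` that represents, in the features of a low-rank stage
with parameters `θ` and `μ`, the Bellman backup of `V`. -/
def backupWeight (θ : M) (μ : S → M) (V : S → R) : M :=
  θ + ∑ s', V s' • μ s'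

theorem map_backupWeight (f : Module.Dual R M) (θ : M) (μ : S → M) (V : S → R) :
    f (backupWeight θ μ V) = f θ + ∑ s', f (μ s') * V s' := by
  simp only [backupWeight, map_add, map_sum, map_smul, smul_eq_mul, mul_comm]

-- `V` is arbitrary, so the linearity of Q-functions takes no induction over the stages.
theorem bellmanBackup_eq_apply_backupWeight {r : S → A → R} {p : S → A → S → R}
    {φ : S → A → Module.Dual R M} {θ : M} {μ : S → M}
    (hr : ∀ s a, r s a = φ s a θ) (hp : ∀ s a s', p s a s' = φ s a (μ s'))
    (V : S → R) (s : S) (a : A) :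
    bellmanBackup r p V s a = φ s a (backupWeight θ μ V) := by
  simp only [bellmanBackup, map_backupWeight, hr, hp]

end BellmanBackup

section ActionValue
variable [Fintype S] (H : ℕ) (r : ℕ → S → A → ℝ) (p : ℕ → S → A → S → ℝ)

theorem Qpi_eq_bellmanBackup (π : ℕ → S → A) (h : ℕ) :
    Qpi H r p π h = bellmanBackup (r h) (p h) (Vpi H r p π (h + 1)) :=
  rfl

theorem Qstar_eq_bellmanBackup [Fintype A] [Nonempty A] (h : ℕ) :
    Qstar H r p h = bellmanBackup (r h) (p h) (Vstar H r p (h + 1)) :=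
  rfl

end ActionValue

theorem stmt9_general {S A M : Type*} [Fintype S] [Fintype A] [Nonempty A]
    [AddCommMonoid M] [Module ℝ M]
    (H : ℕ) (r : ℕ → S → A → ℝ) (p : ℕ → S → A → S → ℝ) (h : ℕ)
    (φ : S → A → Module.Dual ℝ M) (θ : M) (μ : S → M)
    (hr : ∀ s a, r h s a = φ s a θ) (hp : ∀ s a s', p h s a s' = φ s a (μ s')) :
    (∀ π : ℕ → S → A, ∃ θπ : M, ∀ s a, Qpi H r p π h s a = φ s a θπ)
    ∧ ∃ θst : M, ∀ s a, Qstar H r p h s a = φ s a θst := by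
  simp only [Qpi_eq_bellmanBackup, Qstar_eq_bellmanBackup]
  exact ⟨fun π => ⟨_, bellmanBackup_eq_apply_backupWeight hr hp (Vpi H r p π (h + 1))⟩,
    ⟨_, bellmanBackup_eq_apply_backupWeight hr hp (Vstar H r p (h + 1))⟩⟩

theorem stmt9
    {S A : Type*} [Fintype S] [Fintype A] [Nonempty A] {d : ℕ}
    (H : ℕ) (hH : 1 ≤ H)
    (r : ℕ → S → A → ℝ) (p : ℕ → S → A → S → ℝ)
    (hp0 : ∀ h s a s', 0 ≤ p h s a s') (hp1 : ∀ h s a, ∑ s' : S, p h s a s' = 1)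
    -- low-rank structure
    (φ : ℕ → S → A → Fin d → ℝ) (θ : ℕ → Fin d → ℝ) (μvec : ℕ → S → Fin d → ℝ)
    (hr : ∀ h s a, r h s a = φ h s a ⬝ᵥ θ h)
    (hp : ∀ h s a s', p h s a s' = φ h s a ⬝ᵥ μvec h s') :
    -- (i) every policy has a linear Q-function
    (∀ π : ℕ → S → A, ∀ h, 1 ≤ h → h ≤ H → ∃ θπ : Fin d → ℝ,
        ∀ s a, Qpi H r p π h s a = φ h s a ⬝ᵥ θπ)
    -- (ii) the optimal Q-function is linear
    ∧ (∀ h, 1 ≤ h → h ≤ H → ∃ θst : Fin d → ℝ,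
        ∀ s a, Qstar H r p h s a = φ h s a ⬝ᵥ θst) := by
  have linear h := stmt9_general H r p h (fun s a => dotProductBilin ℝ ℝ (φ h s a))
    (θ h) (μvec h) (hr h) (hp h)
  exact ⟨fun π h _ _ => (linear h).1 π, fun h _ _ => (linear h).2⟩
end

section
/- (Bretagnolle–Huber inequality) Let P and Q be probability measures on the same measurable space (Ω, ℱ) and let E ∈ ℱ be an arbitrary event. Then P(E) + Q(Eᶜ) ≥ (1/2) · exp(−KL(P, Q)). -/
/-!
STATEMENT 14 (Bretagnolle–Huber inequality): for probability measures `P, Q`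
on the same measurable space and any event `E`,
`P(E) + Q(Eᶜ) ≥ (1/2) exp(−KL(P,Q))`, with `exp(−∞) = 0`.
-/

open MeasureTheory
open scoped ENNReal

-- The Kullback–Leibler divergence `KL(P,Q) ∈ [0,∞]`:
-- `∫ log(dP/dQ) dP` if `P ≪ Q` (and the log-likelihood ratio is `P`-integrable,
-- otherwise the integral is `+∞`), and `+∞` if `P` is not absolutely continuous
-- with respect to `Q`.
open scoped Classical in
noncomputable def klDiv {Ω : Type*} [MeasurableSpace Ω]
    (P Q : Measure Ω) : ℝ≥0∞ :=
  if P ≪ Q ∧ Integrable (llr P Q) P then ENNReal.ofReal (∫ x, llr P Q x ∂P)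
  else ⊤

/-- `expNeg x = exp(−x)` for `x ∈ [0,∞]`, with `exp(−∞) = 0`. -/
noncomputable def expNeg (x : ℝ≥0∞) : ℝ :=
  if x = ⊤ then 0 else Real.exp (-x.toReal)

/-!
The bound is obtained by squeezing the Bhattacharyya coefficient `∫ √(dP dQ)`. From below, Jensen's
inequality for `exp` bounds it by `exp (-KL(P, Q) / 2)`. From above, the Cauchy–Schwarz inequality
on `E` and on `Eᶜ` bounds it by `√(P E * Q E) + √(Q Eᶜ * P Eᶜ)`. Listing the factors on `Eᶜ` in the
opposite order, a second application of Cauchy–Schwarz bounds the square of this sum by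
`(P E + Q Eᶜ) * (Q E + P Eᶜ)`, whose second factor is at most `2`.
-/

theorem sq_add_rpow_half_mul_le (a b c d : ℝ≥0∞) :
    ((a * b) ^ (1 / 2 : ℝ) + (c * d) ^ (1 / 2 : ℝ)) ^ 2 ≤ (a + c) * (b + d) := by
  have rpow_half_sq (x : ℝ≥0∞) : (x ^ (1 / 2 : ℝ)) ^ (2 : ℝ) = x := by
    rw [← ENNReal.rpow_mul]; norm_num
  have cauchy_schwarz : (a * b) ^ (1 / 2 : ℝ) + (c * d) ^ (1 / 2 : ℝ)
      ≤ ((a + c) * (b + d)) ^ (1 / 2 : ℝ) := by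
    have h := ENNReal.inner_le_Lp_mul_Lq Finset.univ ![a ^ (1 / 2 : ℝ), c ^ (1 / 2 : ℝ)]
      ![b ^ (1 / 2 : ℝ), d ^ (1 / 2 : ℝ)] Real.HolderConjugate.two_two
    simpa only [Fin.sum_univ_two, Matrix.cons_val_zero, Matrix.cons_val_one, rpow_half_sq,
      ← ENNReal.mul_rpow_of_nonneg _ _ one_half_pos.le] using h
  calc ((a * b) ^ (1 / 2 : ℝ) + (c * d) ^ (1 / 2 : ℝ)) ^ 2
      ≤ (((a + c) * (b + d)) ^ (1 / 2 : ℝ)) ^ 2 := by gcongr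
    _ = (a + c) * (b + d) := by rw [← ENNReal.rpow_two, rpow_half_sq]

section

variable {Ω : Type*} [MeasurableSpace Ω]

theorem ofReal_exp_integral_le_lintegral {μ : Measure Ω} [IsProbabilityMeasure μ] {f : Ω → ℝ}
    (hf : Integrable f μ) :
    ENNReal.ofReal (Real.exp (∫ x, f x ∂μ)) ≤ ∫⁻ x, ENNReal.ofReal (Real.exp (f x)) ∂μ := by
  have exp_nonneg : 0 ≤ᵐ[μ] fun x ↦ Real.exp (f x) := ae_of_all _ fun _ ↦ Real.exp_nonneg _
  by_cases h_exp : Integrable (fun x ↦ Real.exp (f x)) μ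
  · rw [← ofReal_integral_eq_lintegral_ofReal h_exp exp_nonneg]
    exact ENNReal.ofReal_le_ofReal <| convexOn_exp.map_integral_le Real.continuous_exp.continuousOn
      isClosed_univ (ae_of_all _ fun _ ↦ Set.mem_univ _) hf h_exp
  · have h_meas := Real.continuous_exp.comp_aestronglyMeasurable hf.aestronglyMeasurable
    have h_top : ∫⁻ x, ENNReal.ofReal (Real.exp (f x)) ∂μ = ⊤ :=
      not_ne_iff.1 <| mt (lintegral_ofReal_ne_top_iff_integrable h_meas exp_nonneg).1 h_exp
    exact h_top ▸ le_top

theorem absolutelyContinuous_and_integrable_llr_of_klDiv_ne_top {P Q : Measure Ω}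
    (h : klDiv P Q ≠ ⊤) : P ≪ Q ∧ Integrable (llr P Q) P :=
  not_imp_comm.1 (fun h_not ↦ if_neg h_not) h

theorem integral_llr_le_toReal_klDiv {P Q : Measure Ω} (hPQ : P ≪ Q)
    (h_int : Integrable (llr P Q) P) :
    ∫ x, llr P Q x ∂P ≤ (klDiv P Q).toReal := by
  rw [klDiv, if_pos ⟨hPQ, h_int⟩, ENNReal.toReal_ofReal']
  exact le_max_left _ _

theorem ofReal_exp_neg_mul_llr {P Q : Measure Ω} [SigmaFinite P] [SigmaFinite Q] (hPQ : P ≪ Q)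
    {t : ℝ} (ht : 0 ≤ t) :
    (fun x ↦ ENNReal.ofReal (Real.exp (-(t * llr P Q x)))) =ᵐ[P] fun x ↦ Q.rnDeriv P x ^ t := by
  filter_upwards [exp_neg_llr hPQ, Q.rnDeriv_lt_top P] with x h_exp h_lt_top
  rw [show -(t * llr P Q x) = -llr P Q x * t by ring, Real.exp_mul, h_exp,
    ← ENNReal.ofReal_rpow_of_nonneg ENNReal.toReal_nonneg ht, ENNReal.ofReal_toReal h_lt_top.ne]

/-- The Bhattacharyya coefficient `∫ √(dP dQ)`, which measures the overlap of `P` and `Q`. It is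
encoded as `∫ √(dQ/dP) dP`, since the part of `Q` singular to `P` contributes nothing. -/
noncomputable def bhattacharyyaCoeff (P Q : Measure Ω) : ℝ≥0∞ :=
  ∫⁻ x, Q.rnDeriv P x ^ (1 / 2 : ℝ) ∂P

theorem ofReal_exp_neg_integral_llr_le_sq_bhattacharyyaCoeff {P Q : Measure Ω}
    [IsProbabilityMeasure P] [SigmaFinite Q] (hPQ : P ≪ Q) (h_int : Integrable (llr P Q) P) :
    ENNReal.ofReal (Real.exp (-∫ x, llr P Q x ∂P)) ≤ bhattacharyyaCoeff P Q ^ 2 := by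
  have jensen : ENNReal.ofReal (Real.exp (-(1 / 2 * ∫ x, llr P Q x ∂P)))
      ≤ bhattacharyyaCoeff P Q := by
    rw [bhattacharyyaCoeff, ← lintegral_congr_ae (ofReal_exp_neg_mul_llr hPQ one_half_pos.le),
      ← integral_const_mul, ← integral_neg]
    exact ofReal_exp_integral_le_lintegral (h_int.const_mul _).neg
  calc ENNReal.ofReal (Real.exp (-∫ x, llr P Q x ∂P))
      = ENNReal.ofReal (Real.exp (-(1 / 2 * ∫ x, llr P Q x ∂P))) ^ 2 := by
        rw [← ENNReal.ofReal_pow (Real.exp_nonneg _), ← Real.exp_nat_mul]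
        congr 2
        push_cast
        ring
    _ ≤ bhattacharyyaCoeff P Q ^ 2 := by gcongr

theorem ofReal_expNeg_klDiv_le_sq_bhattacharyyaCoeff (P Q : Measure Ω)
    [IsProbabilityMeasure P] [SigmaFinite Q] :
    ENNReal.ofReal (expNeg (klDiv P Q)) ≤ bhattacharyyaCoeff P Q ^ 2 := by
  by_cases h_top : klDiv P Q = ⊤
  · simp [expNeg, h_top]
  obtain ⟨hPQ, h_int⟩ := absolutelyContinuous_and_integrable_llr_of_klDiv_ne_top h_top
  calc ENNReal.ofReal (expNeg (klDiv P Q))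
      = ENNReal.ofReal (Real.exp (-(klDiv P Q).toReal)) := by rw [expNeg, if_neg h_top]
    _ ≤ ENNReal.ofReal (Real.exp (-∫ x, llr P Q x ∂P)) := by
        gcongr
        exact integral_llr_le_toReal_klDiv hPQ h_int
    _ ≤ bhattacharyyaCoeff P Q ^ 2 :=
        ofReal_exp_neg_integral_llr_le_sq_bhattacharyyaCoeff hPQ h_int

theorem setLIntegral_rnDeriv_rpow_half_le (P Q : Measure Ω) (s : Set Ω) :
    ∫⁻ x in s, Q.rnDeriv P x ^ (1 / 2 : ℝ) ∂P ≤ (P s * Q s) ^ (1 / 2 : ℝ) := by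
  calc ∫⁻ x in s, Q.rnDeriv P x ^ (1 / 2 : ℝ) ∂P
      = ∫⁻ x in s, 1 ^ (1 / 2 : ℝ) * Q.rnDeriv P x ^ (1 / 2 : ℝ) ∂P := by
        simp only [ENNReal.one_rpow, one_mul]
    _ ≤ (∫⁻ _ in s, 1 ∂P) ^ (1 / 2 : ℝ) * (∫⁻ x in s, Q.rnDeriv P x ∂P) ^ (1 / 2 : ℝ) :=
        ENNReal.lintegral_mul_norm_pow_le aemeasurable_const
          (Q.measurable_rnDeriv P).aemeasurable one_half_pos.le one_half_pos.le (add_halves 1)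
    _ ≤ P s ^ (1 / 2 : ℝ) * Q s ^ (1 / 2 : ℝ) := by
        rw [setLIntegral_one]
        gcongr
        exact Measure.setLIntegral_rnDeriv_le s
    _ = (P s * Q s) ^ (1 / 2 : ℝ) := (ENNReal.mul_rpow_of_nonneg _ _ one_half_pos.le).symm

theorem sq_bhattacharyyaCoeff_le (P Q : Measure Ω) (E : Set Ω) :
    bhattacharyyaCoeff P Q ^ 2 ≤ (P E + Q Eᶜ) * (Q E + P Eᶜ) := by
  have h_split : bhattacharyyaCoeff P Q
      ≤ (P E * Q E) ^ (1 / 2 : ℝ) + (Q Eᶜ * P Eᶜ) ^ (1 / 2 : ℝ) := by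
    calc bhattacharyyaCoeff P Q
        = ∫⁻ x in E ∪ Eᶜ, Q.rnDeriv P x ^ (1 / 2 : ℝ) ∂P := by
          rw [Set.union_compl_self, setLIntegral_univ, bhattacharyyaCoeff]
      _ ≤ ∫⁻ x in E, Q.rnDeriv P x ^ (1 / 2 : ℝ) ∂P
          + ∫⁻ x in Eᶜ, Q.rnDeriv P x ^ (1 / 2 : ℝ) ∂P := lintegral_union_le _ _ _
      _ ≤ (P E * Q E) ^ (1 / 2 : ℝ) + (Q Eᶜ * P Eᶜ) ^ (1 / 2 : ℝ) := by
          rw [mul_comm (Q Eᶜ)]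
          gcongr <;> exact setLIntegral_rnDeriv_rpow_half_le P Q _
  calc bhattacharyyaCoeff P Q ^ 2
      ≤ ((P E * Q E) ^ (1 / 2 : ℝ) + (Q Eᶜ * P Eᶜ) ^ (1 / 2 : ℝ)) ^ 2 := by gcongr
    _ ≤ (P E + Q Eᶜ) * (Q E + P Eᶜ) := sq_add_rpow_half_mul_le _ _ _ _

end

theorem stmt14_general {Ω : Type*} [MeasurableSpace Ω]
    (P Q : Measure Ω) [IsProbabilityMeasure P] [IsFiniteMeasure Q] (E : Set Ω) :
    expNeg (klDiv P Q) ≤ (P.real E + Q.real Eᶜ) * (Q.real E + P.real Eᶜ) := by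
  have h_le : ENNReal.ofReal (expNeg (klDiv P Q)) ≤ (P E + Q Eᶜ) * (Q E + P Eᶜ) :=
    (ofReal_expNeg_klDiv_le_sq_bhattacharyyaCoeff P Q).trans (sq_bhattacharyyaCoeff_le P Q E)
  have h_ne_top : (P E + Q Eᶜ) * (Q E + P Eᶜ) ≠ ⊤ := by finiteness
  simpa only [ENNReal.toReal_mul, ENNReal.toReal_add (measure_ne_top _ _) (measure_ne_top _ _),
    ← measureReal_def] using (ENNReal.ofReal_le_iff_le_toReal h_ne_top).1 h_le

theorem stmt14 {Ω : Type*} [MeasurableSpace Ω]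
    (P Q : Measure Ω) [IsProbabilityMeasure P] [IsProbabilityMeasure Q]
    (E : Set Ω) (hE : MeasurableSet E) :
    (1 / 2) * expNeg (klDiv P Q) ≤ (P E).toReal + (Q Eᶜ).toReal := by
  have h_le : expNeg (klDiv P Q) ≤ (P.real E + Q.real Eᶜ) * (1 + 1) :=
    (stmt14_general P Q E).trans (by gcongr <;> exact measureReal_le_one)
  linarith [measureReal_def P E, measureReal_def Q Eᶜ]
end
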